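/- Let s < T, let X₁,…,X_m : ℝ^d → ℝ^d be C^∞ vector fields with vanishing Euclidean divergence, and let β : [s,T]×ℝ^d → ℝ^m be continuous, continuously differentiable in the space variable, with M := sup_{[s,T]×ℝ^d} |β| < ∞. Suppose ρ : [s,T]×ℝ^d → ℝ is continuous, continuously differentiable in t and twice continuously differentiable in y on (s,T]×ℝ^d, there is a compact set K ⊂ ℝ^d such that ρ(t,·) is supported in K for every t, ρ solves ∂_tρ(t,y) = Δ_Gρ(t,·)(y) + div_G(β(t,·)ρ(t,·))(y) on (s,T]×ℝ^d, and moreover ρ ≥ 0 with ∫_{ℝ^d} ρ(t,y)dy = 1 for every t ∈ [s,T]. Then for every f ∈ C²(ℝ^d) with A := sup_{y} |Δ_G f(y)| < ∞ and B := sup_{y} |∇_G f(y)| < ∞ (Euclidean norm on ℝ^m), and every t₁, t₂ ∈ [s,T] with t₁ ≤ t₂: |∫_{ℝ^d} f(y)(ρ(t₂,y) − ρ(t₁,y)) dy| ≤ (A + M·B)·(t₂ − t₁). -/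

import Mathlib

/-!
Test the equation against `f`: with `F t = ∫ f ρ(t,·)`, differentiation under the integral sign gives
`F' t = ∫ f ∂ₜρ` for `s < t < T`. A divergence-free field `V` satisfies
`∫ g (V h) = -∫ h (V g)` when `h` has compact support (`integral_mul_dirDeriv`), so the equation yields
`F' t = ∫ (Δ_G f - ⟨β, ∇_G f⟩) ρ(t,·)`, which is bounded by `A + M B` because `ρ(t,·)` is a
probability density. As `F` is continuous on `[s, T]`, the mean value theorem concludes; only
derivatives at interior times are needed, so the missing regularity at `t = s` is harmless.
-/

open MeasureTheory Set

/-- Directional derivative of `f` along the vector field `V` at `x`. -/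
noncomputable def dirDeriv {d : ℕ} (V : (Fin d → ℝ) → (Fin d → ℝ))
    (f : (Fin d → ℝ) → ℝ) (x : Fin d → ℝ) : ℝ :=
  fderiv ℝ f x (V x)

/-- Euclidean divergence of a vector field on `ℝ^d`. -/
noncomputable def divE {d : ℕ} (V : (Fin d → ℝ) → (Fin d → ℝ)) (x : Fin d → ℝ) : ℝ :=
  ∑ k, fderiv ℝ (fun y => V y k) x (Pi.single k 1)

/-- Horizontal Laplacian `Δ_G f = Σᵢ Xᵢ(Xᵢ f)`. -/
noncomputable def deltaG {d m : ℕ} (X : Fin m → (Fin d → ℝ) → (Fin d → ℝ))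
    (f : (Fin d → ℝ) → ℝ) (x : Fin d → ℝ) : ℝ :=
  ∑ i, dirDeriv (X i) (dirDeriv (X i) f) x

/-- Horizontal divergence `div_G v = Σᵢ Xᵢ vᵢ`. -/
noncomputable def divG {d m : ℕ} (X : Fin m → (Fin d → ℝ) → (Fin d → ℝ))
    (v : (Fin d → ℝ) → Fin m → ℝ) (x : Fin d → ℝ) : ℝ :=
  ∑ i, dirDeriv (X i) (fun y => v y i) x

/-- Euclidean norm on `ℝ^m`. -/
noncomputable def euclNorm {m : ℕ} (v : Fin m → ℝ) : ℝ :=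
  Real.sqrt (∑ i, v i ^ 2)

lemma contDiff_dirDeriv {d : ℕ} {n k : WithTop ℕ∞} {V : (Fin d → ℝ) → (Fin d → ℝ)}
    {u : (Fin d → ℝ) → ℝ} (hV : ContDiff ℝ n V) (hu : ContDiff ℝ k u) (hk : n + 1 ≤ k) :
    ContDiff ℝ n (dirDeriv V u) :=
  (hu.fderiv_right hk).clm_apply hV

lemma continuous_dirDeriv {d : ℕ} {V : (Fin d → ℝ) → (Fin d → ℝ)}
    {u : (Fin d → ℝ) → ℝ} (hV : Continuous V) (hu : ContDiff ℝ 1 u) :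
    Continuous (dirDeriv V u) :=
  (hu.continuous_fderiv one_ne_zero).clm_apply hV

lemma hasCompactSupport_dirDeriv {d : ℕ} {V : (Fin d → ℝ) → (Fin d → ℝ)}
    {u : (Fin d → ℝ) → ℝ} (hu : HasCompactSupport u) : HasCompactSupport (dirDeriv V u) := by
  refine HasCompactSupport.intro hu fun x hx => ?_
  simp [dirDeriv, fderiv_of_notMem_tsupport (𝕜 := ℝ) hx]

/-- Divergence theorem for a divergence-free field: the integral of `V u = div (u V)` vanishes. -/
lemma integral_dirDeriv_eq_zero {d : ℕ} {V : (Fin d → ℝ) → (Fin d → ℝ)}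
    {u : (Fin d → ℝ) → ℝ} (hV : ContDiff ℝ 1 V) (hdiv : ∀ x, divE V x = 0)
    (hu : ContDiff ℝ 1 u) (hc : HasCompactSupport u) : ∫ x, dirDeriv V u x = 0 := by
  have hVk : ∀ k, ContDiff ℝ 1 (fun x => V x k) := fun k => contDiff_pi.1 hV k
  have hcf : ∀ k : Fin d, Continuous fun x => fderiv ℝ u x (Pi.single k 1) := fun k =>
    (hu.continuous_fderiv one_ne_zero).clm_apply continuous_const
  have hcV : ∀ k : Fin d, Continuous fun x => fderiv ℝ (fun y => V y k) x (Pi.single k 1) :=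
    fun k => ((hVk k).continuous_fderiv one_ne_zero).clm_apply continuous_const
  have hi1 : ∀ k : Fin d, Integrable fun x => V x k * fderiv ℝ u x (Pi.single k 1) := fun k =>
    ((hVk k).continuous.mul (hcf k)).integrable_of_hasCompactSupport
      (hasCompactSupport_dirDeriv (V := fun _ => Pi.single k 1) hc).mul_left
  have hi2 : ∀ k : Fin d,
      Integrable fun x => fderiv ℝ (fun y => V y k) x (Pi.single k 1) * u x := fun k =>
    ((hcV k).mul hu.continuous).integrable_of_hasCompactSupport hc.mul_left
  have hi3 : ∀ k : Fin d, Integrable fun x => V x k * u x := fun k =>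
    ((hVk k).continuous.mul hu.continuous).integrable_of_hasCompactSupport hc.mul_left
  have key : ∀ k : Fin d, ∫ x, V x k * fderiv ℝ u x (Pi.single k 1)
      = -∫ x, fderiv ℝ (fun y => V y k) x (Pi.single k 1) * u x := fun k =>
    integral_mul_fderiv_eq_neg_fderiv_mul_of_integrable (hi2 k) (hi1 k) (hi3 k)
      (fun x _ => ((hVk k).differentiable one_ne_zero) x)
      (fun x _ => (hu.differentiable one_ne_zero) x)
  have hexp : ∀ x, dirDeriv V u x = ∑ k, V x k * fderiv ℝ u x (Pi.single k 1) := by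
    intro x
    unfold dirDeriv
    conv_lhs => rw [pi_eq_sum_univ' (V x)]
    rw [map_sum]
    refine Finset.sum_congr rfl fun k _ => ?_
    rw [map_smul, smul_eq_mul]
  simp_rw [hexp]
  rw [integral_finsetSum _ fun k _ => hi1 k]
  simp_rw [key]
  rw [Finset.sum_neg_distrib, ← integral_finsetSum _ fun k _ => hi2 k]
  simp_rw [← Finset.sum_mul]
  have : ∀ x, ∑ k, fderiv ℝ (fun y => V y k) x (Pi.single k 1) = 0 := hdiv
  simp [this]

/-- Divergence-free fields are skew-adjoint. -/
lemma integral_mul_dirDeriv {d : ℕ} {V : (Fin d → ℝ) → (Fin d → ℝ)}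
    {g h : (Fin d → ℝ) → ℝ} (hV : ContDiff ℝ 1 V) (hdiv : ∀ x, divE V x = 0)
    (hg : ContDiff ℝ 1 g) (hh : ContDiff ℝ 1 h) (hc : HasCompactSupport h) :
    ∫ x, g x * dirDeriv V h x = -∫ x, h x * dirDeriv V g x := by
  have h0 := integral_dirDeriv_eq_zero hV hdiv (hg.mul hh) hc.mul_left
  have hexp : ∀ x, dirDeriv V (fun x => g x * h x) x
      = g x * dirDeriv V h x + h x * dirDeriv V g x := by
    intro x
    unfold dirDeriv
    rw [fderiv_fun_mul (hg.differentiable one_ne_zero x) (hh.differentiable one_ne_zero x)]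
    simp
  have i1 : Integrable fun x => g x * dirDeriv V h x :=
    (hg.continuous.mul (continuous_dirDeriv hV.continuous hh)).integrable_of_hasCompactSupport
      (hasCompactSupport_dirDeriv hc).mul_left
  have i2 : Integrable fun x => h x * dirDeriv V g x :=
    (hh.continuous.mul (continuous_dirDeriv hV.continuous hg)).integrable_of_hasCompactSupport
      hc.mul_right
  simp_rw [hexp] at h0
  rw [integral_add i1 i2] at h0
  linarith

lemma euclNorm_nonneg {m : ℕ} (v : Fin m → ℝ) : 0 ≤ euclNorm v := Real.sqrt_nonneg _

lemma abs_sum_mul_le_euclNorm {m : ℕ} (v w : Fin m → ℝ) :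
    |∑ i, v i * w i| ≤ euclNorm v * euclNorm w := by
  unfold euclNorm
  rw [← Real.sqrt_mul (Finset.sum_nonneg fun i _ => sq_nonneg _), ← Real.sqrt_sq_eq_abs]
  exact Real.sqrt_le_sqrt (Finset.sum_mul_sq_le_sq_mul_sq _ _ _)

/-- Weak form of the Fokker-Planck operator: all derivatives are moved onto `f`. -/
lemma integral_mul_fokkerPlanck {d m : ℕ} {X : Fin m → (Fin d → ℝ) → (Fin d → ℝ)}
    (hX : ∀ i, ContDiff ℝ 1 (X i)) (hXdiv : ∀ i x, divE (X i) x = 0)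
    {b : (Fin d → ℝ) → Fin m → ℝ} (hb : ContDiff ℝ 1 b)
    {r f : (Fin d → ℝ) → ℝ} (hr : ContDiff ℝ 2 r) (hc : HasCompactSupport r)
    (hf : ContDiff ℝ 2 f) :
    ∫ y, f y * (deltaG X r y + divG X (fun z i => b z i * r z) y)
      = ∫ y, (deltaG X f y - ∑ i, b y i * dirDeriv (X i) f y) * r y := by
  have h12 : (1 : WithTop ℕ∞) + 1 ≤ 2 := by norm_num
  have hf1 : ContDiff ℝ 1 f := hf.of_le one_le_two
  have hr1 : ContDiff ℝ 1 r := hr.of_le one_le_two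
  have hXf : ∀ i, ContDiff ℝ 1 (dirDeriv (X i) f) := fun i => contDiff_dirDeriv (hX i) hf h12
  have hXr : ∀ i, ContDiff ℝ 1 (dirDeriv (X i) r) := fun i => contDiff_dirDeriv (hX i) hr h12
  have hbi : ∀ i, ContDiff ℝ 1 (fun z => b z i) := fun i => contDiff_pi.1 hb i
  have hbr : ∀ i, ContDiff ℝ 1 (fun z => b z i * r z) := fun i => (hbi i).mul hr1
  have hbc : ∀ i, HasCompactSupport (fun z => b z i * r z) := fun i => hc.mul_left
  have e1 : ∀ i, ∫ y, f y * dirDeriv (X i) (dirDeriv (X i) r) y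
      = ∫ y, r y * dirDeriv (X i) (dirDeriv (X i) f) y := fun i => by
    rw [integral_mul_dirDeriv (hX i) (hXdiv i) hf1 (hXr i) (hasCompactSupport_dirDeriv hc)]
    simp_rw [mul_comm (dirDeriv (X i) r _)]
    rw [integral_mul_dirDeriv (hX i) (hXdiv i) (hXf i) hr1 hc, neg_neg]
  have e2 : ∀ i, ∫ y, f y * dirDeriv (X i) (fun z => b z i * r z) y
      = -∫ y, (b y i * r y) * dirDeriv (X i) f y := fun i =>
    integral_mul_dirDeriv (hX i) (hXdiv i) hf1 (hbr i) (hbc i)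
  have j1 : ∀ i, Integrable fun y => f y * dirDeriv (X i) (dirDeriv (X i) r) y := fun i =>
    (hf.continuous.mul (continuous_dirDeriv (hX i).continuous (hXr i))
      ).integrable_of_hasCompactSupport
      (hasCompactSupport_dirDeriv (hasCompactSupport_dirDeriv hc)).mul_left
  have j2 : ∀ i, Integrable fun y => f y * dirDeriv (X i) (fun z => b z i * r z) y := fun i =>
    (hf.continuous.mul (continuous_dirDeriv (hX i).continuous (hbr i))
      ).integrable_of_hasCompactSupport (hasCompactSupport_dirDeriv (hbc i)).mul_left
  have j3 : ∀ i, Integrable fun y => r y * dirDeriv (X i) (dirDeriv (X i) f) y := fun i =>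
    (hr.continuous.mul (continuous_dirDeriv (hX i).continuous (hXf i))
      ).integrable_of_hasCompactSupport hc.mul_right
  have j4 : ∀ i, Integrable fun y => (b y i * r y) * dirDeriv (X i) f y := fun i =>
    ((hbr i).continuous.mul (hXf i).continuous).integrable_of_hasCompactSupport (hbc i).mul_right
  have l : ∀ y, f y * (deltaG X r y + divG X (fun z i => b z i * r z) y)
      = ∑ i, (f y * dirDeriv (X i) (dirDeriv (X i) r) y
        + f y * dirDeriv (X i) (fun z => b z i * r z) y) := fun y => by
    simp only [deltaG, divG, Finset.sum_add_distrib, mul_add, Finset.mul_sum]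
  have l' : ∀ y, (deltaG X f y - ∑ i, b y i * dirDeriv (X i) f y) * r y
      = ∑ i, (r y * dirDeriv (X i) (dirDeriv (X i) f) y
        - (b y i * r y) * dirDeriv (X i) f y) := fun y => by
    simp only [deltaG, ← Finset.sum_sub_distrib, Finset.sum_mul]
    exact Finset.sum_congr rfl fun i _ => by ring
  simp_rw [l, l']
  rw [integral_finsetSum _ (by exact fun i _ => (j1 i).add (j2 i)),
    integral_finsetSum _ (by exact fun i _ => (j3 i).sub (j4 i))]
  refine Finset.sum_congr rfl fun i _ => ?_
  rw [integral_add (j1 i) (j2 i), integral_sub (j3 i) (j4 i), e1, e2, sub_eq_add_neg]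

/-- Time Lipschitz estimate against test functions with bounded horizontal Laplacian and
horizontal gradient, for probability solutions of the subelliptic Fokker-Planck equation. -/
theorem fokker_planck_time_lipschitz_pairing
    {d m : ℕ} (hd : 1 ≤ d) (hm : 1 ≤ m)
    (X : Fin m → (Fin d → ℝ) → (Fin d → ℝ))
    (hXsmooth : ∀ i, ContDiff ℝ (⊤ : ℕ∞) (X i))
    (hXdiv : ∀ i x, divE (X i) x = 0)
    (s T : ℝ) (hsT : s < T)
    (β : ℝ → (Fin d → ℝ) → Fin m → ℝ)
    (hβcont : ContinuousOn (fun p : ℝ × (Fin d → ℝ) => β p.1 p.2) (Icc s T ×ˢ univ))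
    (hβC1 : ∀ t ∈ Icc s T, ContDiff ℝ 1 (fun y => β t y))
    (M : ℝ)
    (hβbdd : ∀ t ∈ Icc s T, ∀ y, euclNorm (β t y) ≤ M)
    (ρ : ℝ → (Fin d → ℝ) → ℝ)
    (hρcont : ContinuousOn (fun p : ℝ × (Fin d → ℝ) => ρ p.1 p.2) (Icc s T ×ˢ univ))
    (hρC2 : ∀ t ∈ Ioc s T, ContDiff ℝ 2 (ρ t))
    (hρtC : ContinuousOn (fun p : ℝ × (Fin d → ℝ) => deriv (fun τ => ρ τ p.2) p.1)
      (Ioc s T ×ˢ univ))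
    (K : Set (Fin d → ℝ)) (hK : IsCompact K)
    (hsupp : ∀ t ∈ Icc s T, ∀ y ∉ K, ρ t y = 0)
    (hpde : ∀ t ∈ Ioc s T, ∀ y, HasDerivAt (fun τ => ρ τ y)
      (deltaG X (ρ t) y + divG X (fun z i => β t z i * ρ t z) y) t)
    (hρnonneg : ∀ t ∈ Icc s T, ∀ y, 0 ≤ ρ t y)
    (hρmass : ∀ t ∈ Icc s T, ∫ y, ρ t y = 1) :
    ∀ (f : (Fin d → ℝ) → ℝ), ContDiff ℝ 2 f →
      ∀ (A B : ℝ), (∀ y, |deltaG X f y| ≤ A) →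
        (∀ y, euclNorm (fun i => dirDeriv (X i) f y) ≤ B) →
        ∀ t₁ ∈ Icc s T, ∀ t₂ ∈ Icc s T, t₁ ≤ t₂ →
          |∫ y, f y * (ρ t₂ y - ρ t₁ y)| ≤ (A + M * B) * (t₂ - t₁) := by
  intro f hf A B hA hB t₁ ht₁ t₂ ht₂ h12
  rcases h12.eq_or_lt with rfl | hlt
  · simp
  have hM : 0 ≤ M := (euclNorm_nonneg _).trans (hβbdd t₁ ht₁ 0)
  have hX1 : ∀ i, ContDiff ℝ 1 (X i) := fun i => (hXsmooth i).of_le (by exact_mod_cast le_top)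
  have hρt : ∀ t ∈ Icc s T, Continuous (ρ t) := fun t ht =>
    hρcont.comp_continuous (f := fun y => (t, y)) (by fun_prop) fun y => ⟨ht, mem_univ _⟩
  have hcs : ∀ t ∈ Icc s T, HasCompactSupport (ρ t) := fun t ht =>
    HasCompactSupport.intro hK (hsupp t ht)
  have hint : ∀ t ∈ Icc s T, Integrable fun y => f y * ρ t y := fun t ht =>
    (hf.continuous.mul (hρt t ht)).integrable_of_hasCompactSupport (hcs t ht).mul_left
  have hFcont : ContinuousOn (fun t => ∫ y, f y * ρ t y) (Icc s T) := by
    refine continuousOn_integral_of_compact_support hK ?_ fun t y ht hy => by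
      rw [hsupp t ht y hy, mul_zero]
    exact (hf.continuous.comp continuous_snd).continuousOn.mul hρcont
  have hFderiv : ∀ t ∈ Ioo s T, HasDerivAt (fun t => ∫ y, f y * ρ t y)
      (∫ y, f y * deriv (fun τ => ρ τ y) t) t := by
    intro t ht
    obtain ⟨a, ha, hat⟩ := exists_between ht.1
    obtain ⟨c, htc, hc⟩ := exists_between ht.2
    have hsub : Icc a c ⊆ Ioc s T := fun x hx => ⟨ha.trans_le hx.1, hx.2.trans hc.le⟩
    have hdc : ContinuousOn
        (fun p : ℝ × (Fin d → ℝ) => f p.2 * deriv (fun τ => ρ τ p.2) p.1) (Icc a c ×ˢ univ) :=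
      (hf.continuous.comp continuous_snd).continuousOn.mul
        (hρtC.mono (prod_mono hsub subset_rfl))
    obtain ⟨C, hC⟩ := (isCompact_Icc.prod hK).exists_bound_of_continuousOn
      (hdc.mono (prod_mono subset_rfl (subset_univ K)))
    -- Off `K` the density vanishes at all nearby times, hence so does its time derivative.
    have hoff : ∀ x ∈ Ioo a c, ∀ y ∉ K, deriv (fun τ => ρ τ y) x = 0 := by
      intro x hx y hy
      have : (fun τ => ρ τ y) =ᶠ[nhds x] fun _ => 0 := by
        filter_upwards [Ioo_mem_nhds hx.1 hx.2] with τ hτ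
        exact hsupp τ (Ioc_subset_Icc_self (hsub (Ioo_subset_Icc_self hτ))) y hy
      rw [this.deriv_eq, deriv_const]
    have hnh : Ioo a c ∈ nhds t := Ioo_mem_nhds hat htc
    refine (hasDerivAt_integral_of_dominated_loc_of_deriv_le (bound := K.indicator fun _ => C)
      (F := fun t y => f y * ρ t y) (F' := fun t y => f y * deriv (fun τ => ρ τ y) t)
      hnh ?_ (hint t (Ioo_subset_Icc_self ht)) ?_ ?_ ?_ ?_).2
    · filter_upwards [hnh] with x hx
      exact (hint x (Ioc_subset_Icc_self (hsub (Ioo_subset_Icc_self hx)))).aestronglyMeasurable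
    · refine Continuous.aestronglyMeasurable ?_
      exact hdc.comp_continuous (f := fun y => (t, y)) (by fun_prop)
        fun y => ⟨⟨hat.le, htc.le⟩, mem_univ _⟩
    · refine Filter.Eventually.of_forall fun y x hx => ?_
      by_cases hy : y ∈ K
      · rw [indicator_of_mem hy]
        exact hC (x, y) ⟨Ioo_subset_Icc_self hx, hy⟩
      · rw [indicator_of_notMem hy, hoff x hx y hy, mul_zero, norm_zero]
    · exact (integrable_indicator_iff hK.measurableSet).2
        (integrableOn_const hK.measure_lt_top.ne)
    · refine Filter.Eventually.of_forall fun y x hx => ?_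
      exact ((hpde x (hsub (Ioo_subset_Icc_self hx)) y).differentiableAt.hasDerivAt).const_mul _
  have hbound : ∀ t ∈ Ioo s T, |∫ y, f y * deriv (fun τ => ρ τ y) t| ≤ A + M * B := by
    intro t ht
    have ht' : t ∈ Ioc s T := Ioo_subset_Ioc_self ht
    have ht'' : t ∈ Icc s T := Ioo_subset_Icc_self ht
    simp_rw [fun y => (hpde t ht' y).deriv]
    rw [integral_mul_fokkerPlanck hX1 hXdiv (hβC1 t ht'') (hρC2 t ht') (hcs t ht'') hf]
    have hI : Integrable (ρ t) := (hρt t ht'').integrable_of_hasCompactSupport (hcs t ht'')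
    have hle := norm_integral_le_of_norm_le (μ := volume)
      (f := fun y => (deltaG X f y - ∑ i, β t y i * dirDeriv (X i) f y) * ρ t y)
      (hI.const_mul (A + M * B)) (Filter.Eventually.of_forall fun y => ?_)
    · rwa [integral_const_mul, hρmass t ht'', mul_one] at hle
    · rw [norm_mul, Real.norm_eq_abs, Real.norm_eq_abs, abs_of_nonneg (hρnonneg t ht'' y)]
      refine mul_le_mul_of_nonneg_right ?_ (hρnonneg t ht'' y)
      refine (abs_sub _ _).trans (add_le_add (hA y) ?_)
      exact (abs_sum_mul_le_euclNorm _ _).trans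
        (mul_le_mul (hβbdd t ht'' y) (hB y) (euclNorm_nonneg _) hM)
  have hsub : Ioo t₁ t₂ ⊆ Ioo s T := Ioo_subset_Ioo ht₁.1 ht₂.2
  obtain ⟨c, hc, hceq⟩ := exists_hasDerivAt_eq_slope (fun t => ∫ y, f y * ρ t y)
    (fun t => ∫ y, f y * deriv (fun τ => ρ τ y) t) hlt
    (hFcont.mono (Icc_subset_Icc ht₁.1 ht₂.2)) fun t ht => hFderiv t (hsub ht)
  have hpos : 0 < t₂ - t₁ := sub_pos.2 hlt
  have hb := hbound c (hsub hc)
  rw [hceq, abs_div, abs_of_pos hpos, div_le_iff₀ hpos] at hb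
  simp_rw [mul_sub (f _)]
  rwa [integral_sub (hint t₂ ht₂) (hint t₁ ht₁)]
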